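/- ∫₀^∞ [I₀(t)]²[K₀(t)]⁴·t·(2 − 85t² + 72t⁴) dt = 0. -/

import Mathlib

open Real MeasureTheory Set

/-- Modified Bessel function `I₀(t) = (1/π)∫₀^π exp(t cos θ) dθ`. -/
noncomputable def I0 (t : ℝ) : ℝ := (1 / π) * ∫ θ in (0:ℝ)..π, exp (t * cos θ)

/-- Modified Bessel function `K₀(t) = ∫₀^∞ exp(−t cosh u) du`. -/
noncomputable def K0 (t : ℝ) : ℝ := ∫ u in Ioi (0:ℝ), exp (-(t * Real.cosh u))

/-- Rising factorial `(a)ₙ = a(a+1)⋯(a+n−1)`. -/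
noncomputable def ris (a : ℝ) (n : ℕ) : ℝ := ∏ k ∈ Finset.range n, (a + k)

/-- Generalized hypergeometric series `ₚF_q(a; b | x)`. -/
noncomputable def pFq (a b : List ℝ) (x : ℝ) : ℝ :=
  ∑' n : ℕ, ((a.map fun p => ris p n).prod / (b.map fun q => ris q n).prod) * x ^ n
    / (n.factorial : ℝ)

open Filter Topology

lemma exp_le_two_cosh (u : ℝ) : exp u ≤ 2 * Real.cosh u := by
  rw [Real.cosh_eq]; have := exp_pos (-u); linarith

lemma cosh_exp_bound (n : ℕ) {t : ℝ} (ht : 0 < t) (u : ℝ) :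
    Real.cosh u ^ n * exp (-(t * Real.cosh u)) ≤
      (2 * ((n + 1).factorial : ℝ) / t ^ (n + 1)) * exp (-u) := by
  have hc := Real.cosh_pos u
  have h1 := Real.pow_div_factorial_le_exp (x := t * Real.cosh u) (by positivity) (n + 1)
  have h2 := exp_le_two_cosh u
  have hf : (0 : ℝ) < ((n + 1).factorial : ℝ) := by positivity
  rw [exp_neg, exp_neg, ← div_eq_mul_inv, ← div_eq_mul_inv, div_div,
    div_le_div_iff₀ (exp_pos _) (by positivity)] at *
  rw [div_le_iff₀ hf] at h1
  calc Real.cosh u ^ n * (t ^ (n + 1) * exp u)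
      ≤ Real.cosh u ^ n * (t ^ (n + 1) * (2 * Real.cosh u)) := by gcongr
    _ = 2 * (t * Real.cosh u) ^ (n + 1) := by ring
    _ ≤ 2 * (exp (t * Real.cosh u) * ((n + 1).factorial : ℝ)) := by gcongr
    _ = _ := by ring

lemma KK_int (n : ℕ) {t : ℝ} (ht : 0 < t) :
    IntegrableOn (fun u => Real.cosh u ^ n * exp (-(t * Real.cosh u))) (Ioi 0) := by
  refine Integrable.mono' ((integrableOn_exp_neg_Ioi 0).const_mul
    (2 * ((n + 1).factorial : ℝ) / t ^ (n + 1))) ?_ ?_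
  · have hc : Continuous (fun u => Real.cosh u ^ n * exp (-(t * Real.cosh u))) := by
      have := Real.continuous_cosh
      fun_prop
    exact hc.aestronglyMeasurable
  · refine Eventually.of_forall fun u => ?_
    have hc := Real.cosh_pos u
    rw [Real.norm_of_nonneg (by positivity)]
    exact cosh_exp_bound n ht u

noncomputable def KK (n : ℕ) (t : ℝ) : ℝ :=
  ∫ u in Ioi (0:ℝ), Real.cosh u ^ n * exp (-(t * Real.cosh u))

lemma K0_eq : K0 = KK 0 := by
  funext t; simp [K0, KK]

lemma KK_deriv (n : ℕ) {t : ℝ} (ht : 0 < t) : HasDerivAt (KK n) (-KK (n + 1) t) t := by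
  have hcont : ∀ (m : ℕ) (x : ℝ),
      Continuous (fun u => Real.cosh u ^ m * exp (-(x * Real.cosh u))) := by
    intro m x
    have := Real.continuous_cosh
    fun_prop
  have h := hasDerivAt_integral_of_dominated_loc_of_deriv_le (μ := volume.restrict (Ioi (0:ℝ)))
    (F := fun x u => Real.cosh u ^ n * exp (-(x * Real.cosh u)))
    (F' := fun x u => -(Real.cosh u ^ (n + 1) * exp (-(x * Real.cosh u))))
    (x₀ := t) (s := Ioi (t / 2))
    (bound := fun u => Real.cosh u ^ (n + 1) * exp (-((t / 2) * Real.cosh u)))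
    (Ioi_mem_nhds (by linarith))
    (Eventually.of_forall fun x => (hcont n x).aestronglyMeasurable)
    (KK_int n ht) ((hcont (n + 1) t).neg.aestronglyMeasurable)
    (Eventually.of_forall fun u x hx => by
      have hc := Real.cosh_pos u
      have hx' : t / 2 ≤ x := le_of_lt hx
      rw [norm_neg, Real.norm_of_nonneg (by positivity)]
      gcongr)
    (KK_int (n + 1) (by positivity))
    (Eventually.of_forall fun u x hx => by
      have h1 : HasDerivAt (fun x : ℝ => -(x * Real.cosh u)) (-(1 * Real.cosh u)) x :=
        ((hasDerivAt_id x).mul_const _).neg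
      have h2 := (h1.exp).const_mul (Real.cosh u ^ n)
      refine HasDerivAt.congr_deriv h2 ?_
      ring)
  have h2 := h.2
  rw [integral_neg] at h2
  exact h2

lemma sinh_tendsto (n : ℕ) {t : ℝ} (ht : 0 < t) :
    Tendsto (fun u => Real.cosh u ^ n * exp (-(t * Real.cosh u))) atTop (𝓝 0) := by
  refine squeeze_zero (fun u => ?_) (fun u => cosh_exp_bound n ht u) ?_
  · have hc := Real.cosh_pos u
    positivity
  · have := (tendsto_exp_neg_atTop_nhds_zero).const_mul
      (2 * ((n + 1).factorial : ℝ) / t ^ (n + 1))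
    simpa using this

lemma KK_ode {t : ℝ} (ht : 0 < t) : KK 1 t = t * KK 2 t - t * KK 0 t := by
  have hd : ∀ u ∈ Ici (0:ℝ), HasDerivAt (fun u => Real.sinh u * exp (-(t * Real.cosh u)))
      ((Real.cosh u ^ 1 * exp (-(t * Real.cosh u))
        - (t * (Real.cosh u ^ 2 * exp (-(t * Real.cosh u)))
        - t * (Real.cosh u ^ 0 * exp (-(t * Real.cosh u)))))) u := by
    intro u _
    have h1 := (Real.hasDerivAt_sinh u).mul (((Real.hasDerivAt_cosh u).const_mul t).neg.exp)
    refine HasDerivAt.congr_deriv h1 ?_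
    simp only [Pi.neg_apply]
    rw [Real.cosh_sq u]; ring
  have hl : Tendsto (fun u => Real.sinh u * exp (-(t * Real.cosh u))) atTop (𝓝 0) := by
    refine squeeze_zero' ?_ ?_ (sinh_tendsto 1 ht)
    · filter_upwards [eventually_ge_atTop 0] with u hu
      have := Real.sinh_nonneg_iff.2 hu
      positivity
    · refine Eventually.of_forall fun u => ?_
      have := (Real.sinh_lt_cosh u).le
      rw [pow_one]; gcongr
  have hi : IntegrableOn (fun u => t * (Real.cosh u ^ 2 * exp (-(t * Real.cosh u)))
      - t * (Real.cosh u ^ 0 * exp (-(t * Real.cosh u)))) (Ioi 0) :=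
    ((KK_int 2 ht).const_mul t).sub ((KK_int 0 ht).const_mul t)
  have h := integral_Ioi_of_hasDerivAt_of_tendsto' hd ((KK_int 1 ht).sub hi) hl
  rw [integral_sub (KK_int 1 ht) hi,
    integral_sub ((KK_int 2 ht).const_mul t) ((KK_int 0 ht).const_mul t),
    integral_const_mul, integral_const_mul] at h
  simp only [Real.sinh_zero, zero_mul, sub_zero] at h
  change KK 1 t - (t * KK 2 t - t * KK 0 t) = 0 at h
  linarith

lemma B_deriv {t : ℝ} (ht : 0 < t) :
    HasDerivAt (fun t => t * KK 1 t) (-(t * KK 0 t)) t := by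
  have h := (hasDerivAt_id t).mul (KK_deriv 1 ht)
  refine HasDerivAt.congr_deriv h ?_
  have := KK_ode ht
  simp only [id]
  linarith

lemma KK_nonneg (n : ℕ) (t : ℝ) : 0 ≤ KK n t := by
  refine integral_nonneg fun u => ?_
  have hc := Real.cosh_pos u
  positivity

lemma sinh_integral {t : ℝ} (ht : 0 < t) :
    IntegrableOn (fun u => t * (Real.sinh u * exp (-(t * Real.cosh u)))) (Ioi 0) ∧
    ∫ u in Ioi (0:ℝ), t * (Real.sinh u * exp (-(t * Real.cosh u))) = exp (-t) := by
  have hd : ∀ u ∈ Ici (0:ℝ), HasDerivAt (fun u => -exp (-(t * Real.cosh u)))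
      (t * (Real.sinh u * exp (-(t * Real.cosh u)))) u := by
    intro u _
    have h1 := (((Real.hasDerivAt_cosh u).const_mul t).neg.exp).neg
    refine HasDerivAt.congr_deriv h1 ?_
    simp only [Pi.neg_apply]
    ring
  have hp : ∀ u ∈ Ioi (0:ℝ), 0 ≤ t * (Real.sinh u * exp (-(t * Real.cosh u))) := by
    intro u hu
    have := Real.sinh_nonneg_iff.2 (le_of_lt hu)
    positivity
  have hl : Tendsto (fun u => -exp (-(t * Real.cosh u))) atTop (𝓝 0) := by
    have := (sinh_tendsto 0 ht).neg
    simpa using this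
  refine ⟨integrableOn_Ioi_deriv_of_nonneg' hd hp hl, ?_⟩
  rw [integral_Ioi_of_hasDerivAt_of_nonneg' hd hp hl]
  simp

lemma B_lower {t : ℝ} (ht : 0 < t) : exp (-t) ≤ t * KK 1 t := by
  obtain ⟨h1, h2⟩ := sinh_integral ht
  rw [← h2, KK, ← integral_const_mul]
  refine setIntegral_mono_on h1 ((KK_int 1 ht).const_mul t) measurableSet_Ioi fun u _ => ?_
  have := (Real.sinh_lt_cosh u).le
  rw [pow_one]; gcongr

lemma B_upper {t : ℝ} (ht : 0 < t) : t * KK 1 t ≤ exp (-t) + t * KK 0 t := by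
  obtain ⟨h1, h2⟩ := sinh_integral ht
  rw [← h2, KK, KK, ← integral_const_mul, ← integral_const_mul,
    ← integral_add h1 ((KK_int 0 ht).const_mul t)]
  refine setIntegral_mono_on ((KK_int 1 ht).const_mul t) (h1.add ((KK_int 0 ht).const_mul t))
    measurableSet_Ioi fun u hu => ?_
  have h3 : Real.cosh u ≤ Real.sinh u + 1 := by
    have h4 := Real.cosh_sub_sinh u
    have : exp (-u) ≤ 1 := exp_le_one_iff.2 (by have : 0 < u := hu; linarith)
    linarith
  rw [pow_one, pow_zero, one_mul]
  calc t * (Real.cosh u * exp (-(t * Real.cosh u)))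
      ≤ t * ((Real.sinh u + 1) * exp (-(t * Real.cosh u))) := by gcongr
    _ = _ := by ring

lemma K_upper {t : ℝ} (ht : 0 < t) :
    KK 0 t ≤ 4 * exp (Real.log 2 / 4) * exp (-(Real.log t / 4)) := by
  have hi : IntegrableOn (fun u : ℝ => exp ((-1/4) * u)) (Ioi 0) :=
    integrableOn_exp_mul_Ioi (by norm_num) 0
  have hv : ∫ u in Ioi (0:ℝ), exp ((-1/4) * u) = 4 := by
    rw [integral_exp_mul_Ioi (by norm_num)]; norm_num
  have : 4 * exp (Real.log 2 / 4) * exp (-(Real.log t / 4))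
      = ∫ u in Ioi (0:ℝ), (exp (Real.log 2 / 4) * exp (-(Real.log t / 4))) * exp ((-1/4) * u) := by
    rw [integral_const_mul, hv]; ring
  rw [this]
  refine setIntegral_mono_on (KK_int 0 ht) (hi.const_mul _) measurableSet_Ioi fun u hu => ?_
  rw [pow_zero, one_mul, ← exp_add, ← exp_add]
  apply exp_le_exp.2
  have hx : 0 < t * Real.cosh u := mul_pos ht (Real.cosh_pos u)
  have h1 := Real.log_le_sub_one_of_pos hx
  rw [Real.log_mul ht.ne' (Real.cosh_pos u).ne'] at h1
  have h2 : u ≤ Real.log 2 + Real.log (Real.cosh u) := by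
    rw [← Real.log_mul (by norm_num) (Real.cosh_pos u).ne']
    rw [Real.le_log_iff_exp_le (by have := Real.cosh_pos u; positivity)]
    exact exp_le_two_cosh u
  linarith

lemma L_tendsto : Tendsto (fun t => exp (Real.log t / 2) * KK 0 t) (𝓝[>] 0) (𝓝 0) := by
  have h1 : Tendsto (fun t => 4 * exp (Real.log 2 / 4) * exp (Real.log t / 4))
      (𝓝[>] 0) (𝓝 0) := by
    have h := (Real.tendsto_exp_atBot.comp
      (Real.tendsto_log_nhdsGT_zero.atBot_div_const (by norm_num : (0:ℝ) < 4))).const_mul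
      (4 * exp (Real.log 2 / 4))
    simpa using h
  refine squeeze_zero' ?_ ?_ h1
  · refine Eventually.of_forall fun t => mul_nonneg (exp_pos _).le (KK_nonneg _ _)
  · filter_upwards [self_mem_nhdsWithin] with t ht
    calc exp (Real.log t / 2) * KK 0 t ≤
        exp (Real.log t / 2) * (4 * exp (Real.log 2 / 4) * exp (-(Real.log t / 4))) := by
          gcongr; exact K_upper ht
      _ = 4 * exp (Real.log 2 / 4) * (exp (Real.log t / 2) * exp (-(Real.log t / 4))) := by ring
      _ = _ := by rw [← exp_add]; congr 2; ring

lemma s_tendsto : Tendsto (fun t => exp (Real.log t / 2)) (𝓝[>] 0) (𝓝 0) :=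
  Real.tendsto_exp_atBot.comp
      (Real.tendsto_log_nhdsGT_zero.atBot_div_const (by norm_num : (0:ℝ) < 2))

lemma s_sq {t : ℝ} (ht : 0 < t) : exp (Real.log t / 2) ^ 2 = t := by
  rw [← exp_nat_mul]
  have : ((2 : ℕ) : ℝ) * (Real.log t / 2) = Real.log t := by push_cast; ring
  rw [this, exp_log ht]

lemma B_tendsto : Tendsto (fun t => t * KK 1 t) (𝓝[>] 0) (𝓝 1) := by
  have he : Tendsto (fun t : ℝ => exp (-t)) (𝓝[>] 0) (𝓝 1) := by
    have : Continuous (fun t : ℝ => exp (-t)) := by fun_prop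
    have h := (this.tendsto 0).mono_left (nhdsWithin_le_nhds (s := Ioi 0))
    simpa using h
  have hu : Tendsto (fun t => exp (-t) + exp (Real.log t / 2) * (exp (Real.log t / 2) * KK 0 t))
      (𝓝[>] 0) (𝓝 1) := by
    simpa using he.add (s_tendsto.mul L_tendsto)
  refine tendsto_of_tendsto_of_tendsto_of_le_of_le' he hu ?_ ?_
  · filter_upwards [self_mem_nhdsWithin] with t ht using B_lower ht
  · filter_upwards [self_mem_nhdsWithin] with t ht
    have h := B_upper ht
    have h2 := s_sq ht
    calc t * KK 1 t ≤ exp (-t) + t * KK 0 t := h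
      _ = exp (-t) + (exp (Real.log t / 2) ^ 2) * KK 0 t := by rw [h2]
      _ = _ := by ring

lemma KK_large (n : ℕ) {t : ℝ} (ht : 1 ≤ t) : KK n t ≤ exp 1 * KK n 1 * exp (-t) := by
  have : exp 1 * KK n 1 * exp (-t) = ∫ u in Ioi (0:ℝ),
      (exp 1 * exp (-t)) * (Real.cosh u ^ n * exp (-(1 * Real.cosh u))) := by
    rw [integral_const_mul, KK]; ring
  rw [this]
  refine setIntegral_mono_on (KK_int n (by linarith)) ((KK_int n one_pos).const_mul _)
    measurableSet_Ioi fun u _ => ?_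
  have hc := Real.one_le_cosh u
  have h : exp (-(t * Real.cosh u)) ≤ exp 1 * exp (-t) * exp (-(1 * Real.cosh u)) := by
    rw [← exp_add, ← exp_add]
    apply exp_le_exp.2
    nlinarith
  calc Real.cosh u ^ n * exp (-(t * Real.cosh u))
      ≤ Real.cosh u ^ n * (exp 1 * exp (-t) * exp (-(1 * Real.cosh u))) := by
        have := Real.cosh_pos u
        gcongr
    _ = _ := by ring

noncomputable def II (n : ℕ) (t : ℝ) : ℝ :=
  (1 / π) * ∫ θ in (0:ℝ)..π, cos θ ^ n * exp (t * cos θ)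

lemma I0_eq : I0 = II 0 := by
  funext t; simp [I0, II]

lemma II_deriv (n : ℕ) (t : ℝ) : HasDerivAt (II n) (II (n + 1) t) t := by
  have hcont : ∀ (m : ℕ) (x : ℝ), Continuous (fun u => cos u ^ m * exp (x * cos u)) := by
    intro m x
    fun_prop
  have h := intervalIntegral.hasDerivAt_integral_of_dominated_loc_of_deriv_le (μ := volume)
    (a := 0) (b := π)
    (F := fun x u => cos u ^ n * exp (x * cos u))
    (F' := fun x u => cos u ^ (n + 1) * exp (x * cos u))
    (x₀ := t) (s := Metric.ball t 1)
    (bound := fun u => exp (|t| + 1))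
    (Metric.ball_mem_nhds t one_pos)
    (Eventually.of_forall fun x => (hcont n x).aestronglyMeasurable)
    ((hcont n t).intervalIntegrable _ _) ((hcont (n + 1) t).aestronglyMeasurable)
    (Eventually.of_forall fun u _ x hx => by
      have h1 : |cos u| ≤ 1 := abs_cos_le_one u
      have h2 : |x| ≤ |t| + 1 := by
        have h3 : |x - t| < 1 := by simpa [Real.dist_eq] using hx
        have h4 := abs_sub_abs_le_abs_sub x t
        linarith
      rw [norm_mul, norm_pow, Real.norm_eq_abs, Real.norm_of_nonneg (exp_pos _).le]
      have h5 : |cos u| ^ (n + 1) ≤ 1 := pow_le_one₀ (abs_nonneg _) h1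
      have h6 : x * cos u ≤ |t| + 1 := by
        calc x * cos u ≤ |x * cos u| := le_abs_self _
          _ = |x| * |cos u| := abs_mul _ _
          _ ≤ |x| * 1 := by gcongr
          _ ≤ _ := by linarith
      calc |cos u| ^ (n + 1) * exp (x * cos u) ≤ 1 * exp (|t| + 1) := by gcongr
        _ = _ := one_mul _)
    (intervalIntegrable_const)
    (Eventually.of_forall fun u _ x hx => by
      have h1 : HasDerivAt (fun x : ℝ => (x * cos u)) (1 * cos u) x :=
        ((hasDerivAt_id x).mul_const _)
      have h2 := (h1.exp).const_mul (cos u ^ n)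
      refine HasDerivAt.congr_deriv h2 ?_
      ring)
  exact h.2.const_mul (1 / π)

lemma II_ode (t : ℝ) : II 1 t = t * II 0 t - t * II 2 t := by
  have hcont : ∀ (m : ℕ), Continuous (fun u => cos u ^ m * exp (t * cos u)) := by
    intro m
    fun_prop
  have hint : ∀ m : ℕ, IntervalIntegrable (fun u => cos u ^ m * exp (t * cos u)) volume 0 π :=
    fun m => (hcont m).intervalIntegrable _ _
  have hd : ∀ u ∈ uIcc (0:ℝ) π, HasDerivAt (fun u => sin u * exp (t * cos u))
      (cos u ^ 1 * exp (t * cos u) - (t * (cos u ^ 0 * exp (t * cos u))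
        - t * (cos u ^ 2 * exp (t * cos u)))) u := by
    intro u _
    have h1 := (Real.hasDerivAt_sin u).mul (((Real.hasDerivAt_cos u).const_mul t).exp)
    refine HasDerivAt.congr_deriv h1 ?_
    rw [Real.cos_sq']; ring
  have hi : IntervalIntegrable (fun u => t * (cos u ^ 0 * exp (t * cos u))
        - t * (cos u ^ 2 * exp (t * cos u))) volume 0 π := ((hint 0).const_mul t).sub ((hint 2).const_mul t)
  have h := intervalIntegral.integral_eq_sub_of_hasDerivAt hd ((hint 1).sub hi)
  rw [intervalIntegral.integral_sub (hint 1) hi,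
    intervalIntegral.integral_sub ((hint 0).const_mul t) ((hint 2).const_mul t),
    intervalIntegral.integral_const_mul, intervalIntegral.integral_const_mul] at h
  simp only [Real.sin_zero, Real.sin_pi, zero_mul, sub_zero] at h
  unfold II
  linear_combination (1 / π) * h

lemma A_deriv (t : ℝ) : HasDerivAt (fun t => t * II 1 t) (t * II 0 t) t := by
  have h := (hasDerivAt_id t).mul (II_deriv 1 t)
  refine HasDerivAt.congr_deriv h ?_
  have := II_ode t
  simp only [id]
  linarith

lemma II_bound (n : ℕ) {t : ℝ} (ht : 0 ≤ t) : |II n t| ≤ exp t := by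
  have h : ‖∫ θ in (0:ℝ)..π, cos θ ^ n * exp (t * cos θ)‖ ≤ exp t * |π - 0| := by
    apply intervalIntegral.norm_integral_le_of_norm_le_const
    intro u _
    rw [norm_mul, norm_pow, Real.norm_eq_abs, Real.norm_of_nonneg (exp_pos _).le]
    have h5 : |cos u| ^ n ≤ 1 := pow_le_one₀ (abs_nonneg _) (abs_cos_le_one u)
    have h6 : t * cos u ≤ t := by nlinarith [cos_le_one u]
    calc |cos u| ^ n * exp (t * cos u) ≤ 1 * exp t := by gcongr
      _ = _ := one_mul _
  rw [sub_zero, abs_of_pos pi_pos, Real.norm_eq_abs] at h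
  rw [II, abs_mul, abs_of_pos (by positivity : 0 < 1 / π)]
  have := pi_pos
  calc 1 / π * |∫ θ in (0:ℝ)..π, cos θ ^ n * exp (t * cos θ)| ≤ 1 / π * (exp t * π) := by gcongr
    _ = exp t := by field_simp

lemma II_zero : II 0 0 = 1 := by
  simp [II, pi_ne_zero]

/-- the primitive, as a polynomial. -/
noncomputable def GP (t J A K B : ℝ) : ℝ :=
  A^2*B^4 - 3*t^2*((6*A^2*K^2*B^2 - 8*J*A*K*B^3 + J^2*B^4)/15)
  + 2*t^2*((-4*A^2*K^3*B + 12*J*A*K^2*B^2 - 4*J^2*K*B^3)/20)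
  + (3*t^4-t^2)*((A^2*K^4 - 8*J*A*K^3*B + 6*J^2*K^2*B^2)/15)
  + (2*t^2-18*t^4)/5*((2*J*A*K^4 - 4*J^2*K^3*B)/6)
  - (4*t^2-82*t^4+30*t^6)/30*(J^2*K^4)

noncomputable def GG (t : ℝ) : ℝ := GP t (II 0 t) (t * II 1 t) (KK 0 t) (t * KK 1 t)

lemma GP_deriv {J A K B : ℝ → ℝ} {t i a k b : ℝ} (hI : HasDerivAt J i t) (hA : HasDerivAt A a t)
    (hK : HasDerivAt K k t) (hB : HasDerivAt B b t)
    (hi : A t = t * i) (ha : a = t * J t) (hk : B t = -(t * k)) (hb : b = -(t * K t)) :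
    HasDerivAt (fun t => GP t (J t) (A t) (K t) (B t))
      (-(4/30) * (J t ^ 2 * K t ^ 4 * t * (2 - 85*t^2 + 72*t^4))) t := by
  have ht := hasDerivAt_id t
  have e1 := (hA.pow 2).mul (hB.pow 4)
  have e2 := ((ht.pow 2).const_mul 3).mul ((((((hA.pow 2).const_mul 6).mul (hK.pow 2)).mul (hB.pow 2)).sub
    ((((hI.const_mul 8).mul hA).mul hK).mul (hB.pow 3))).add ((hI.pow 2).mul (hB.pow 4)) |>.div_const 15)
  have e3 := ((ht.pow 2).const_mul 2).mul ((((((hA.pow 2).const_mul (-4)).mul (hK.pow 3)).mul hB).add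
    ((((hI.const_mul 12).mul hA).mul (hK.pow 2)).mul (hB.pow 2))).sub
      ((((hI.pow 2).const_mul 4).mul hK).mul (hB.pow 3)) |>.div_const 20)
  have e4 := (((ht.pow 4).const_mul 3).sub (ht.pow 2)).mul ((((hA.pow 2).mul (hK.pow 4)).sub
    ((((hI.const_mul 8).mul hA).mul (hK.pow 3)).mul hB)).add
      ((((hI.pow 2).const_mul 6).mul (hK.pow 2)).mul (hB.pow 2)) |>.div_const 15)
  have e5 := ((((ht.pow 2).const_mul 2).sub ((ht.pow 4).const_mul 18)).div_const 5).mul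
    (((((hI.const_mul 2).mul hA).mul (hK.pow 4)).sub
      ((((hI.pow 2).const_mul 4).mul (hK.pow 3)).mul hB)).div_const 6)
  have e6 := (((((ht.pow 2).const_mul 4).sub ((ht.pow 4).const_mul 82)).add
    ((ht.pow 6).const_mul 30)).div_const 30).mul ((hI.pow 2).mul (hK.pow 4))
  have e := ((((e1.sub e2).add e3).add e4).add e5).sub e6
  refine HasDerivAt.congr_deriv e ?_
  simp only [Pi.mul_apply, Pi.pow_apply, Pi.sub_apply, Pi.add_apply, id, hi, ha, hk, hb]
  norm_num
  ring

lemma GG_deriv {t : ℝ} (ht : 0 < t) : HasDerivAt GG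
    (-(4/30) * (II 0 t ^ 2 * KK 0 t ^ 4 * t * (2 - 85*t^2 + 72*t^4))) t :=
  GP_deriv (II_deriv 0 t) (A_deriv t) (KK_deriv 0 ht) (B_deriv ht) rfl rfl
    (by simp) rfl

lemma GG_zero : GG 0 = 0 := by simp [GG, GP]

lemma GG_tendsto_zero : Tendsto GG (𝓝[>] 0) (𝓝 0) := by
  have hI : Tendsto (II 0) (𝓝[>] 0) (𝓝 1) := by
    have := (II_deriv 0 0).continuousAt.tendsto
    rw [II_zero] at this
    exact this.mono_left nhdsWithin_le_nhds
  have hA : Tendsto (fun t => t * II 1 t) (𝓝[>] 0) (𝓝 0) := by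
    have := (A_deriv 0).continuousAt.tendsto
    rw [zero_mul] at this
    exact this.mono_left nhdsWithin_le_nhds
  let P : ℝ × ℝ × ℝ × ℝ × ℝ → ℝ := fun p =>
    let s := p.1; let J := p.2.1; let A := p.2.2.1; let L := p.2.2.2.1; let B := p.2.2.2.2
    A^2*B^4 - 3*((6*A^2*L^2*s^2*B^2 - 8*J*A*L*s^3*B^3 + J^2*s^4*B^4)/15)
    + 2*((-4*A^2*L^3*s*B + 12*J*A*L^2*s^2*B^2 - 4*J^2*L*s^3*B^3)/20)
    + (3*s^4-1)*((A^2*L^4 - 8*J*A*L^3*s*B + 6*J^2*L^2*s^2*B^2)/15)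
    + (2-18*s^4)/5*((2*J*A*L^4 - 4*J^2*L^3*s*B)/6)
    - (4-82*s^4+30*s^8)/30*(J^2*L^4)
  have hP : Continuous P := by fun_prop
  have hlim := (hP.tendsto (0, 1, 0, 0, 1)).comp
    (s_tendsto.prodMk_nhds (hI.prodMk_nhds (hA.prodMk_nhds (L_tendsto.prodMk_nhds B_tendsto))))
  have h0 : P (0, 1, 0, 0, 1) = 0 := by simp [P]
  rw [h0] at hlim
  refine hlim.congr' ?_
  filter_upwards [self_mem_nhdsWithin] with t ht
  have hs := s_sq ht
  simp only [Function.comp, P, GG, GP]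
  generalize t * II 1 t = A
  generalize t * KK 1 t = B
  generalize exp (Real.log t / 2) = s at *
  rw [← hs]
  ring

lemma tendsto_pow_mul_exp_neg' (n : ℕ) {c : ℝ} (hc : 0 < c) :
    Tendsto (fun t : ℝ => t ^ n * exp (-(c * t))) atTop (𝓝 0) := by
  have h := ((Real.tendsto_pow_mul_exp_neg_atTop_nhds_zero n).comp
    (tendsto_id.const_mul_atTop hc)).const_mul ((c ^ n)⁻¹)
  rw [mul_zero] at h
  refine h.congr fun t => ?_
  simp only [Function.comp, id, mul_pow]
  field_simp

lemma I_inf (n m : ℕ) : Tendsto (fun t => exp (-(t/4)) ^ 5 * (t ^ m * II n t)) atTop (𝓝 0) := by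
  refine squeeze_zero_norm' ?_ (tendsto_pow_mul_exp_neg' m (by norm_num : (0:ℝ) < 1/4))
  filter_upwards [eventually_ge_atTop 0] with t ht
  rw [norm_mul, norm_mul, Real.norm_of_nonneg (by positivity : 0 ≤ exp (-(t/4)) ^ 5),
    Real.norm_of_nonneg (by positivity : 0 ≤ t ^ m), Real.norm_eq_abs]
  calc exp (-(t/4)) ^ 5 * (t ^ m * |II n t|) ≤ exp (-(t/4)) ^ 5 * (t ^ m * exp t) := by
        gcongr; exact II_bound n ht
    _ = t ^ m * (exp (-(t/4)) ^ 5 * exp t) := by ring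
    _ = _ := by rw [← exp_nat_mul, ← exp_add]; congr 2; push_cast; ring

lemma K_inf (n m : ℕ) : Tendsto (fun t => exp (t/4) ^ 3 * (t ^ m * KK n t)) atTop (𝓝 0) := by
  have h := (tendsto_pow_mul_exp_neg' m (by norm_num : (0:ℝ) < 1/4)).const_mul (exp 1 * KK n 1)
  rw [mul_zero] at h
  refine squeeze_zero' ?_ ?_ h
  · filter_upwards [eventually_ge_atTop 0] with t ht
    have := KK_nonneg n t
    positivity
  filter_upwards [eventually_ge_atTop 1] with t ht
  calc exp (t/4) ^ 3 * (t ^ m * KK n t)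
      ≤ exp (t/4) ^ 3 * (t ^ m * (exp 1 * KK n 1 * exp (-t))) := by
        gcongr; exact KK_large n ht
    _ = exp 1 * KK n 1 * (t ^ m * (exp (t/4) ^ 3 * exp (-t))) := by ring
    _ = _ := by rw [← exp_nat_mul, ← exp_add]; congr 3; push_cast; ring

lemma GG_tendsto_inf : Tendsto GG atTop (𝓝 0) := by
  have q : ∀ n : ℕ, Tendsto (fun t : ℝ => t ^ n * exp (-(t/4)) ^ 2) atTop (𝓝 0) := by
    intro n
    refine (tendsto_pow_mul_exp_neg' n (by norm_num : (0:ℝ) < 1/2)).congr fun t => ?_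
    rw [← exp_nat_mul]; congr 2; push_cast; ring
  let P : ℝ × ℝ × ℝ × ℝ × ℝ × ℝ × ℝ × ℝ → ℝ := fun p =>
    let q0 := p.1; let q2 := p.2.1; let q4 := p.2.2.1; let q6 := p.2.2.2.1
    let J := p.2.2.2.2.1; let A := p.2.2.2.2.2.1
    let K := p.2.2.2.2.2.2.1; let B := p.2.2.2.2.2.2.2
    q0*A^2*B^4 - 3*q2*((6*A^2*K^2*B^2 - 8*J*A*K*B^3 + J^2*B^4)/15)
    + 2*q2*((-4*A^2*K^3*B + 12*J*A*K^2*B^2 - 4*J^2*K*B^3)/20)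
    + (3*q4-q2)*((A^2*K^4 - 8*J*A*K^3*B + 6*J^2*K^2*B^2)/15)
    + (2*q2-18*q4)/5*((2*J*A*K^4 - 4*J^2*K^3*B)/6)
    - (4*q2-82*q4+30*q6)/30*(J^2*K^4)
  have hP : Continuous P := by fun_prop
  have hlim := (hP.tendsto (0, 0, 0, 0, 0, 0, 0, 0)).comp
    ((q 0).prodMk_nhds ((q 2).prodMk_nhds ((q 4).prodMk_nhds ((q 6).prodMk_nhds
      ((I_inf 0 0).prodMk_nhds ((I_inf 1 1).prodMk_nhds
        ((K_inf 0 0).prodMk_nhds (K_inf 1 1))))))))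
  have h0 : P (0, 0, 0, 0, 0, 0, 0, 0) = 0 := by simp [P]
  rw [h0] at hlim
  refine hlim.congr fun t => ?_
  have hxy : exp (-(t/4)) * exp (t/4) = 1 := by rw [← exp_add]; simp
  simp only [Function.comp, P, GG]
  generalize exp (-(t/4)) = x at *
  generalize exp (t/4) = y at *
  have : GP t (II 0 t) (t * II 1 t) (KK 0 t) (t * KK 1 t)
    = (x * y) ^ 12 * GP t (II 0 t) (t * II 1 t) (KK 0 t) (t * KK 1 t) := by rw [hxy]; ring
  rw [this]
  simp only [GP]
  ring

theorem sum_rule_IKM24 :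
    (∫ t in Ioi (0:ℝ), (I0 t)^2 * (K0 t)^4 * t * (2 - 85*t^2 + 72*t^4)) = 0 := by
  have hc : ContinuousWithinAt GG (Ici 0) 0 := by
    rw [← continuousWithinAt_Ioi_iff_Ici]
    unfold ContinuousWithinAt
    rw [GG_zero]
    exact GG_tendsto_zero
  rw [I0_eq, K0_eq]
  by_cases hint : IntegrableOn (fun t => II 0 t ^ 2 * KK 0 t ^ 4 * t * (2 - 85*t^2 + 72*t^4)) (Ioi 0)
  · have h := integral_Ioi_of_hasDerivAt_of_tendsto hc (fun t ht => GG_deriv ht)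
      (hint.const_mul (-(4/30))) GG_tendsto_inf
    rw [integral_const_mul, GG_zero] at h
    linarith
  · exact integral_undef hint
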